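/- arXiv:nlin/0512074 — 6 statements merged into one kernel-verified Lean document; each statement's English description precedes it below -/
import Mathlib

section
/- Let (S^1,S^2) be a Lax–Sato pair. Then the identity (dS^1∧dS^2)_− = 0 holds if and only if the Lax–Sato equations hold: ∂^1_n S^j = −{(z^n S^2)_+, S^j} and ∂^2_n S^j = {(z^n S^1)_+, S^j} for all n ≥ 0 and j = 1,2, together with {S^1, S^2} = 1. -/
/-!
Common setup for the second heavenly equation hierarchy (Bogdanov–Konopelchenko).

Formal series in `z` with `z`-exponents bounded above are encoded as Hahn series
over `ℤ` in the variable `w = z⁻¹`: the coefficient at `n : ℤ` of `A : LS R` is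
the coefficient of `z^{-n}` of the corresponding series.
-/

noncomputable section

/-- Series in `z` with `z`-exponents bounded above (the coefficient at `n : ℤ`
is the coefficient of `z^{-n}`). -/
abbrev LS (R : Type*) [CommRing R] : Type _ := HahnSeries ℤ R

/-- The variable `z`. -/
def zz {R : Type*} [CommRing R] : LS R := HahnSeries.single (-1 : ℤ) (1 : R)

/-- Constant series. -/
def CC {R : Type*} [CommRing R] (r : R) : LS R := HahnSeries.C r

/-- `tail g = Σ_{k≥0} (g k) · z^{-(k+1)}` : a series in negative powers of `z`. -/
def tail {R : Type*} [CommRing R] (g : ℕ → R) : LS R :=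
  HahnSeries.single (1 : ℤ) (1 : R) * HahnSeries.ofPowerSeries ℤ R (PowerSeries.mk g)

/-- `geom v = 1/(z - v) := Σ_{k≥0} v^k z^{-(k+1)}`. -/
def geom {R : Type*} [CommRing R] (v : R) : LS R := tail fun k => v ^ k

/-- The projection `(·)_-` keeping only negative powers of `z`. -/
def truncMinus {R : Type*} [CommRing R] (A : LS R) : LS R where
  coeff n := if 1 ≤ n then A.coeff n else 0
  isPWO_support' := A.isPWO_support'.mono (fun n hn => by
    by_cases h : (1:ℤ) ≤ n <;> simp_all [Function.mem_support])

/-- The projection `(·)_+` keeping only nonnegative powers of `z`. -/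
def truncPlus {R : Type*} [CommRing R] (A : LS R) : LS R where
  coeff n := if n ≤ 0 then A.coeff n else 0
  isPWO_support' := A.isPWO_support'.mono (fun n hn => by
    by_cases h : n ≤ (0:ℤ) <;> simp_all [Function.mem_support])

/-- A commutative ring equipped with pairwise commuting derivations `∂^{j+1}_n`
(`j : Fin 2`, `n : ℕ`) and distinguished elements `t^{j+1}_n` satisfying
`∂^j_m t^k_n = δ_{jk} δ_{mn}`. -/
structure HeavenlySetting (R : Type*) [CommRing R] where
  d : Fin 2 → ℕ → R → R
  d_add : ∀ j n a b, d j n (a + b) = d j n a + d j n b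
  d_mul : ∀ j n a b, d j n (a * b) = a * d j n b + d j n a * b
  d_comm : ∀ j n k m a, d j n (d k m a) = d k m (d j n a)
  t : Fin 2 → ℕ → R
  d_t : ∀ j n k m, d j n (t k m) = if j = k ∧ n = m then 1 else 0

/-- The data of a Lax–Sato pair: `Sneg j n` is the coefficient `S^{j+1}_{n+1}`
of `z^{-(n+1)}` in `S^{j+1} = Σ_{n≥0} t^{j+1}_n z^n + Σ_{n≥1} S^{j+1}_n z^{-n}`. -/
structure LaxPair (R : Type*) [CommRing R] where
  Sneg : Fin 2 → ℕ → R

namespace HeavenlySetting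

variable {R : Type*} [CommRing R] (H : HeavenlySetting R) (P : LaxPair R)

/-- The coefficient of `z^n` in `S^{j+1}`. -/
def coeffS (j : Fin 2) (n : ℤ) : R :=
  if 0 ≤ n then H.t j n.toNat else P.Sneg j (-n - 1).toNat

/-- The series `∂^{a+1}_m S^{j+1}` (its `z`-exponents are bounded above since
`∂^{a+1}_m t^{j+1}_n = δ_{aj} δ_{mn}`). -/
def dS (a : Fin 2) (m : ℕ) (j : Fin 2) : LS R :=
  HahnSeries.single (-(m : ℤ)) (if a = j then 1 else 0)
    + tail fun k => H.d a m (P.Sneg j k)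

/-- `S^{j+1}_x = ∂^1_0 S^{j+1}`. -/
def Sx (j : Fin 2) : LS R := H.dS P 0 0 j

/-- `S^{j+1}_y = ∂^2_0 S^{j+1}`. -/
def Sy (j : Fin 2) : LS R := H.dS P 1 0 j

/-- The condition `(dS^1 ∧ dS^2)_- = 0`. -/
def WedgeMinusZero : Prop :=
  ∀ a b : Fin 2, ∀ m n : ℕ,
    truncMinus (H.dS P a m 0 * H.dS P b n 1 - H.dS P b n 0 * H.dS P a m 1) = 0

/-- The Lax–Sato equations `∂^1_n S^j = -{(z^n S^2)_+, S^j}`,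
`∂^2_n S^j = {(z^n S^1)_+, S^j}` together with the bracket `{S^1,S^2} = 1`;
here `{f,g} = f_x g_y - f_y g_x` and `((z^n S^k)_+)_x = (z^n (S^k)_x)_+` etc. -/
def LaxSatoEqs : Prop :=
  (∀ n : ℕ, ∀ j : Fin 2,
    H.dS P 0 n j =
      -(truncPlus (zz ^ n * H.Sx P 1) * H.Sy P j
        - truncPlus (zz ^ n * H.Sy P 1) * H.Sx P j)) ∧
  (∀ n : ℕ, ∀ j : Fin 2,
    H.dS P 1 n j =
      truncPlus (zz ^ n * H.Sx P 0) * H.Sy P j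
        - truncPlus (zz ^ n * H.Sy P 0) * H.Sx P j) ∧
  (H.Sx P 0 * H.Sy P 1 - H.Sy P 0 * H.Sx P 1 = 1)

/-- Coefficient of `z'^k` in `D^{a+1}(z') S^{j+1}(z) = Σ_{m≥0} z'^{-m-1} ∂^{a+1}_m S^{j+1}(z)`. -/
def Dc (a j : Fin 2) (k : ℤ) : LS R :=
  if k ≤ -1 then H.dS P a (-k - 1).toNat j else 0

/-- Generating Lax–Sato equations
`(z'-z) D^1(z') S^j(z) = -{S^2(z'), S^j(z)}` and
`(z'-z) D^2(z') S^j(z) = {S^1(z'), S^j(z)}`, stated coefficientwise in `z'`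
(`k : ℤ` being the `z'`-exponent; both sides of each equation are series in `z`). -/
def GenLaxSato : Prop :=
  (∀ j : Fin 2, ∀ k : ℤ,
    H.Dc P 0 j (k - 1) - zz * H.Dc P 0 j k =
      -(CC (H.d 0 0 (H.coeffS P 1 k)) * H.Sy P j
        - CC (H.d 1 0 (H.coeffS P 1 k)) * H.Sx P j)) ∧
  (∀ j : Fin 2, ∀ k : ℤ,
    H.Dc P 1 j (k - 1) - zz * H.Dc P 1 j k =
      CC (H.d 0 0 (H.coeffS P 0 k)) * H.Sy P j
        - CC (H.d 1 0 (H.coeffS P 0 k)) * H.Sx P j)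

/-- `Θ` is a τ-function for the pair: `S^1_{n+1} = -∂^2_n Θ`, `S^2_{n+1} = ∂^1_n Θ`. -/
def IsTau (Θ : R) : Prop :=
  ∀ n : ℕ, P.Sneg 0 n = -H.d 1 n Θ ∧ P.Sneg 1 n = H.d 0 n Θ

/-- `σ` is a wave function with constant parameter `p`:
`(z-p) D^1(z)σ = -{S^2(z), σ}` and `(z-p) D^2(z)σ = {S^1(z), σ}`,
coefficientwise in `z^{-1}`, with `p` annihilated by all derivations. -/
def IsWave (σ p : R) : Prop :=
  (∀ a : Fin 2, ∀ n : ℕ, H.d a n p = 0) ∧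
  ((zz - CC p) * tail (fun n => H.d 0 n σ) =
    -(H.Sx P 1 * CC (H.d 1 0 σ) - H.Sy P 1 * CC (H.d 0 0 σ))) ∧
  ((zz - CC p) * tail (fun n => H.d 1 n σ) =
    H.Sx P 0 * CC (H.d 1 0 σ) - H.Sy P 0 * CC (H.d 0 0 σ))

end HeavenlySetting

/-!
Put `w(u, v) = u₁ v₂ - v₁ u₂`. Since `∂^j_m S = z^m e_j` modulo negative powers of `z`, pairing
`∂^j_m S` under `w` with `S_x` or `S_y` gives, modulo negative powers, `± z^m` times a component of
`S_x` or `S_y`. Hence if the wedges have no negative powers, they are up to sign the truncations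
`(·)_+` occurring in the Lax–Sato equations; in particular `w(S_x, S_y) = (S^2_y)_+ = 1`, and the
Lax–Sato equations are Cramer's rule for `∂^j_m S` in the basis `S_x, S_y`. Conversely, these
equations express all `∂^j_m S` through `S_x` and `S_y` with coefficients free of negative powers,
so each wedge is a determinant of such coefficients times `w(S_x, S_y) = 1`.
-/

/-- The value `u₁ v₂ - v₁ u₂` of the standard area form on a pair of vectors: it is both the
coefficient of `dS^1 ∧ dS^2` at a pair of derivatives of `(S^1, S^2)` and, at `(S_x, S_y)`, the
bracket `{S^1, S^2}`. The order of the factors is that of `WedgeMinusZero`. -/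
def wedge {A : Type*} [NonUnitalNonAssocRing A] (u v : Fin 2 → A) : A :=
  u 0 * v 1 - v 0 * u 1

section Wedge

variable {A : Type*} [NonUnitalNonAssocRing A]

theorem wedge_sub_left (u u' v : Fin 2 → A) :
    wedge (u - u') v = wedge u v - wedge u' v := by
  simp only [wedge, Pi.sub_apply, sub_mul, mul_sub]
  abel

theorem wedge_sub_right (u v v' : Fin 2 → A) :
    wedge u (v - v') = wedge u v - wedge u v' := by
  simp only [wedge, Pi.sub_apply, sub_mul, mul_sub]
  abel

theorem wedge_single_zero_left (f : A) (v : Fin 2 → A) :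
    wedge (Pi.single 0 f) v = f * v 1 := by
  simp [wedge]

theorem wedge_single_one_right (u : Fin 2 → A) (f : A) :
    wedge u (Pi.single 1 f) = u 0 * f := by
  simp [wedge]

end Wedge

section WedgeComm

variable {A : Type*} [CommRing A]

theorem wedge_swap (u v : Fin 2 → A) : wedge v u = -wedge u v := by
  simp only [wedge]
  ring

theorem wedge_mul_apply (u v p : Fin 2 → A) (j : Fin 2) :
    wedge u v * p j = wedge p v * u j - wedge p u * v j := by
  fin_cases j <;> simp only [wedge, Fin.zero_eta, Fin.mk_one] <;> ring

theorem wedge_linear_combination (c c' u v : Fin 2 → A) :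
    wedge (fun j => c 0 * u j + c 1 * v j) (fun j => c' 0 * u j + c' 1 * v j) =
      wedge c c' * wedge u v := by
  simp only [wedge]
  ring

end WedgeComm

/-- The Hahn series over `Γ` whose support lies in `s`. With `z⁻¹` as the variable and `Γ = ℤ`, the
sets `Set.Iic 0`, `Set.Ioi 0` and `Set.Ici 0` select the series with only nonnegative, only
negative and only nonpositive powers of `z`, respectively. -/
def supportedIn (R : Type*) {Γ : Type*} [PartialOrder Γ] [AddGroup R] (s : Set Γ) :
    AddSubgroup (HahnSeries Γ R) where
  carrier := {A | A.support ⊆ s}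
  zero_mem' := HahnSeries.support_zero.trans_subset (Set.empty_subset s)
  add_mem' hA hB := (HahnSeries.support_add_subset _ _).trans (Set.union_subset hA hB)
  neg_mem' hA := (HahnSeries.support_neg_subset _).trans hA

section SupportedIn

variable {Γ R : Type*} [PartialOrder Γ] {s t : Set Γ}

theorem coeff_eq_zero_of_mem_supportedIn [AddGroup R] {A : HahnSeries Γ R} {n : Γ}
    (hA : A ∈ supportedIn R s) (hn : n ∉ s) : A.coeff n = 0 :=
  of_not_not fun h => hn (hA h)

theorem supportedIn_mono [AddGroup R] (hst : s ⊆ t) : supportedIn R s ≤ supportedIn R t :=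
  fun _ hA => hA.trans hst

theorem single_mem_supportedIn [AddGroup R] {n : Γ} (hn : n ∈ s) (r : R) :
    HahnSeries.single n r ∈ supportedIn R s :=
  HahnSeries.support_single_subset.trans (Set.singleton_subset_iff.mpr hn)

end SupportedIn

section SupportedInMul

open Pointwise

variable {Γ R : Type*} [AddCommMonoid Γ] [PartialOrder Γ] [IsOrderedCancelAddMonoid Γ]
  {s t u : Set Γ}

theorem mul_mem_supportedIn [NonUnitalNonAssocRing R] {A B : HahnSeries Γ R} (hst : s + t ⊆ u)
    (hA : A ∈ supportedIn R s) (hB : B ∈ supportedIn R t) : A * B ∈ supportedIn R u :=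
  HahnSeries.support_mul_subset.trans ((Set.add_subset_add hA hB).trans hst)

theorem wedge_mem_supportedIn [CommRing R] {a b : Fin 2 → HahnSeries Γ R} (hst : s + t ⊆ u)
    (ha : ∀ j, a j ∈ supportedIn R s) (hb : ∀ j, b j ∈ supportedIn R t) :
    wedge a b ∈ supportedIn R u := by
  rw [wedge, mul_comm (b 0)]
  exact sub_mem (mul_mem_supportedIn hst (ha 0) (hb 1)) (mul_mem_supportedIn hst (ha 1) (hb 0))

end SupportedInMul

section LaurentSeries

variable {R : Type*} [CommRing R]

theorem ofPowerSeries_mem_supportedIn (f : PowerSeries R) :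
    HahnSeries.ofPowerSeries ℤ R f ∈ supportedIn R (Set.Ici 0) := by
  rw [HahnSeries.ofPowerSeries_apply]
  refine HahnSeries.support_embDomain_subset.trans ?_
  rintro _ ⟨k, -, rfl⟩
  exact Int.natCast_nonneg k

theorem tail_mem_supportedIn (g : ℕ → R) : tail g ∈ supportedIn R (Set.Ioi 0) :=
  mul_mem_supportedIn (s := Set.Ioi 0) (by simpa using Set.Ioi_add_Ici_subset (0 : ℤ) 0)
    (single_mem_supportedIn one_pos 1) (ofPowerSeries_mem_supportedIn _)

theorem zz_pow (n : ℕ) : (zz : LS R) ^ n = HahnSeries.single (-(n : ℤ)) 1 := by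
  simp [zz, HahnSeries.single_pow]

theorem truncMinus_eq_zero_iff {A : LS R} :
    truncMinus A = 0 ↔ A ∈ supportedIn R (Set.Iic 0) := by
  constructor
  · intro h n hn
    by_contra hnot
    have hpos : 0 < n := not_le.mp hnot
    have hcoeff : (if 1 ≤ n then A.coeff n else 0) = 0 := congrArg (HahnSeries.coeff · n) h
    rw [if_pos (by omega)] at hcoeff
    exact hn hcoeff
  · intro hA
    ext n
    refine ite_eq_right_iff.mpr fun hn => coeff_eq_zero_of_mem_supportedIn hA fun hnonpos => ?_
    exact absurd (hn.trans hnonpos) (by decide)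

theorem truncPlus_eq_iff {A B : LS R} :
    truncPlus A = B ↔ B ∈ supportedIn R (Set.Iic 0) ∧ A - B ∈ supportedIn R (Set.Ioi 0) := by
  constructor
  · rintro rfl
    refine ⟨fun n hn => ?_, fun n hn => ?_⟩
    · exact of_not_not fun hpos => hn (if_neg hpos)
    · exact lt_of_not_ge fun hnonpos : n ≤ 0 => hn (by simp [truncPlus, hnonpos])
  · rintro ⟨hB, hAB⟩
    ext n
    change (if n ≤ 0 then A.coeff n else 0) = B.coeff n
    split_ifs with hn
    · exact sub_eq_zero.mp (coeff_eq_zero_of_mem_supportedIn hAB (not_lt.mpr hn))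
    · exact (coeff_eq_zero_of_mem_supportedIn hB hn).symm

theorem truncPlus_mem_supportedIn (A : LS R) : truncPlus A ∈ supportedIn R (Set.Iic 0) :=
  (truncPlus_eq_iff.mp rfl).1

theorem truncPlus_mul_apply_one {u v : Fin 2 → LS R} {f : LS R}
    (hu : ∀ j, u j - Pi.single (M := fun _ => LS R) 0 f j ∈ supportedIn R (Set.Ioi 0))
    (hv : ∀ j, v j ∈ supportedIn R (Set.Ici 0)) (huv : wedge u v ∈ supportedIn R (Set.Iic 0)) :
    truncPlus (f * v 1) = wedge u v := by
  refine truncPlus_eq_iff.mpr ⟨huv, ?_⟩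
  rw [← neg_mem_iff, neg_sub, ← wedge_single_zero_left, ← wedge_sub_left]
  exact wedge_mem_supportedIn (by simpa using Set.Ioi_add_Ici_subset (0 : ℤ) 0) hu hv

theorem truncPlus_mul_apply_zero {u v : Fin 2 → LS R} {f : LS R}
    (hu : ∀ j, u j ∈ supportedIn R (Set.Ici 0))
    (hv : ∀ j, v j - Pi.single (M := fun _ => LS R) 1 f j ∈ supportedIn R (Set.Ioi 0))
    (huv : wedge u v ∈ supportedIn R (Set.Iic 0)) :
    truncPlus (f * u 0) = wedge u v := by
  refine truncPlus_eq_iff.mpr ⟨huv, ?_⟩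
  rw [← neg_mem_iff, neg_sub, mul_comm, ← wedge_single_one_right, ← wedge_sub_right]
  exact wedge_mem_supportedIn (by simpa using Set.Ici_add_Ioi_subset (0 : ℤ) 0) hu hv

end LaurentSeries

section LaxSato

variable {R : Type*} [CommRing R]

/-- `D a m` is `z^m` times the basis vector `e_a` up to negative powers of `z`, as is
`∂^{a+1}_m (S^1, S^2)` for a Lax–Sato pair. -/
def IsNormalized (D : Fin 2 → ℕ → Fin 2 → LS R) : Prop :=
  ∀ a m j, D a m j - Pi.single (M := fun _ => LS R) a (zz ^ m) j ∈ supportedIn R (Set.Ioi 0)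

/-- The Lax–Sato equations for a family `D a m` of vectors of series in the role of
`∂^{a+1}_m (S^1, S^2)`, so that `D 0 0` and `D 1 0` stand for the `x`- and `y`-derivatives. -/
def IsLaxSato (D : Fin 2 → ℕ → Fin 2 → LS R) : Prop :=
  (∀ n j, D 0 n j =
    -(truncPlus (zz ^ n * D 0 0 1) * D 1 0 j - truncPlus (zz ^ n * D 1 0 1) * D 0 0 j)) ∧
  (∀ n j, D 1 n j =
    truncPlus (zz ^ n * D 0 0 0) * D 1 0 j - truncPlus (zz ^ n * D 1 0 0) * D 0 0 j) ∧
  wedge (D 0 0) (D 1 0) = 1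

variable {D : Fin 2 → ℕ → Fin 2 → LS R}

theorem IsNormalized.apply_zero_mem_supportedIn (hD : IsNormalized D) (a j : Fin 2) :
    D a 0 j ∈ supportedIn R (Set.Ici 0) := by
  have hconst : Pi.single (M := fun _ => LS R) a (zz ^ 0) j ∈ supportedIn R (Set.Ici 0) := by
    rw [pow_zero, Pi.single_apply]
    split_ifs
    · exact single_mem_supportedIn Set.self_mem_Ici 1
    · exact zero_mem _
  simpa using add_mem (supportedIn_mono Set.Ioi_subset_Ici_self (hD a 0 j)) hconst

theorem IsNormalized.truncPlus_apply_one_one (hD : IsNormalized D) :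
    truncPlus (D 1 0 1) = 1 :=
  truncPlus_eq_iff.mpr
    ⟨single_mem_supportedIn Set.self_mem_Iic 1, by simpa using hD 1 0 1⟩

theorem IsNormalized.isLaxSato (hD : IsNormalized D)
    (hW : ∀ a b m n, wedge (D a m) (D b n) ∈ supportedIn R (Set.Iic 0)) : IsLaxSato D := by
  have htrunc₁ (n : ℕ) (b : Fin 2) : truncPlus (zz ^ n * D b 0 1) = wedge (D 0 n) (D b 0) :=
    truncPlus_mul_apply_one (hD 0 n) (hD.apply_zero_mem_supportedIn b) (hW 0 b n 0)
  have htrunc₀ (n : ℕ) (b : Fin 2) : truncPlus (zz ^ n * D b 0 0) = wedge (D b 0) (D 1 n) :=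
    truncPlus_mul_apply_zero (hD.apply_zero_mem_supportedIn b) (hD 1 n) (hW b 1 0 n)
  have hbracket : wedge (D 0 0) (D 1 0) = 1 := by
    rw [← htrunc₁, pow_zero, one_mul, hD.truncPlus_apply_one_one]
  have hcramer (p : Fin 2 → LS R) (j : Fin 2) :
      p j = wedge p (D 1 0) * D 0 0 j - wedge p (D 0 0) * D 1 0 j := by
    rw [← wedge_mul_apply, hbracket, one_mul]
  refine ⟨fun n j => ?_, fun n j => ?_, hbracket⟩
  · rw [htrunc₁, htrunc₁, neg_sub]
    exact hcramer (D 0 n) j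
  · rw [htrunc₀, htrunc₀, wedge_swap (D 1 n), wedge_swap (D 1 n), neg_mul, neg_mul,
      neg_sub_neg]
    exact hcramer (D 1 n) j

theorem IsLaxSato.exists_eq_linear_combination (h : IsLaxSato D) (a : Fin 2) (m : ℕ) :
    ∃ c : Fin 2 → LS R, (∀ i, c i ∈ supportedIn R (Set.Iic 0)) ∧
      D a m = fun j => c 0 * D 0 0 j + c 1 * D 1 0 j := by
  obtain ⟨h₀, h₁, -⟩ := h
  revert a
  simp only [Fin.forall_fin_two]
  constructor
  · refine ⟨![truncPlus (zz ^ m * D 1 0 1), -truncPlus (zz ^ m * D 0 0 1)],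
      ⟨truncPlus_mem_supportedIn _, neg_mem (truncPlus_mem_supportedIn _)⟩, funext fun j => ?_⟩
    rw [h₀ m j, Matrix.cons_val_zero, Matrix.cons_val_one, Matrix.cons_val_zero]
    ring
  · refine ⟨![-truncPlus (zz ^ m * D 1 0 0), truncPlus (zz ^ m * D 0 0 0)],
      ⟨neg_mem (truncPlus_mem_supportedIn _), truncPlus_mem_supportedIn _⟩, funext fun j => ?_⟩
    rw [h₁ m j, Matrix.cons_val_zero, Matrix.cons_val_one, Matrix.cons_val_zero]
    ring

theorem IsLaxSato.wedge_mem (h : IsLaxSato D) (a b : Fin 2) (m n : ℕ) :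
    wedge (D a m) (D b n) ∈ supportedIn R (Set.Iic 0) := by
  obtain ⟨c, hc, hDc⟩ := h.exists_eq_linear_combination a m
  obtain ⟨c', hc', hDc'⟩ := h.exists_eq_linear_combination b n
  rw [hDc, hDc', wedge_linear_combination, h.2.2, mul_one]
  exact wedge_mem_supportedIn (by simpa using Set.Iic_add_Iic_subset (0 : ℤ) 0) hc hc'

end LaxSato

theorem heavenly_wedgeMinus_iff_laxSato_general {R : Type*} [CommRing R]
    {D : Fin 2 → ℕ → Fin 2 → LS R} (hD : IsNormalized D) :
    (∀ a b m n, truncMinus (wedge (D a m) (D b n)) = 0) ↔ IsLaxSato D := by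
  simp only [truncMinus_eq_zero_iff]
  exact ⟨hD.isLaxSato, IsLaxSato.wedge_mem⟩

theorem HeavenlySetting.isNormalized_dS {R : Type*} [CommRing R] (H : HeavenlySetting R)
    (P : LaxPair R) : IsNormalized (H.dS P) := by
  intro a m j
  have hsingle : HahnSeries.single (-(m : ℤ)) (if a = j then (1 : R) else 0) =
      Pi.single (M := fun _ => LS R) a (zz ^ m) j := by
    rw [zz_pow, Pi.single_apply, apply_ite (HahnSeries.single (-(m : ℤ))), map_zero]
    simp only [eq_comm]
  rw [dS, hsingle, add_sub_cancel_left]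
  exact tail_mem_supportedIn _

/-- For a Lax–Sato pair, `(dS^1 ∧ dS^2)_- = 0` holds iff the
Lax–Sato equations hold together with `{S^1, S^2} = 1`. -/
theorem heavenly_wedgeMinus_iff_laxSato {R : Type*} [CommRing R]
    (H : HeavenlySetting R) (P : LaxPair R) :
    H.WedgeMinusZero P ↔ H.LaxSatoEqs P :=
  heavenly_wedgeMinus_iff_laxSato_general (H.isNormalized_dS P)
end
end

section
/- Let (S^1,S^2) be a Lax–Sato pair satisfying (dS^1∧dS^2)_− = 0. Let Û be a first-order operator Û F := Σ_i (u^1_i ∂^1_i F + u^2_i ∂^2_i F) (finite sum) whose coefficients u^1_i, u^2_i are polynomials in z with coefficients in R (i.e. (u^1_i)_− = (u^2_i)_− = 0). If (Û S^1)_+ = 0 and (Û S^2)_+ = 0, then Û S^1 = 0 and Û S^2 = 0. -/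
/-!
Common setup for the second heavenly equation hierarchy (Bogdanov–Konopelchenko).

Formal series in `z` with `z`-exponents bounded above are encoded as Hahn series
over `ℤ` in the variable `w = z⁻¹`: the coefficient at `n : ℤ` of `A : LS R` is
the coefficient of `z^{-n}` of the corresponding series.
-/

noncomputable section

/-!
Let `J` be the Jacobian matrix `∂(S^1, S^2)/∂(x, y)`, which is the identity matrix plus negative
powers of `z`, and let `w = (Û S^1, Û S^2)`. By Cramer's rule `J * cramer J w = det J • w`, and
`det J` is invertible, so it suffices that `cramer J w = 0`. Each Cramer determinant is linear in
`w`, and on `w = (∂_a S^1, ∂_a S^2)` it is a coefficient of `dS^1 ∧ dS^2`; hence it is a polynomial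
in `z` for `w = (Û S^1, Û S^2)`. On the other hand it only involves negative powers of `z`, because
`J` has nonpositive powers of `z` and `w` has negative ones.
-/

section Truncation

variable {R : Type*} [CommRing R]

theorem coeff_truncMinus (A : LS R) (n : ℤ) :
    (truncMinus A).coeff n = if 1 ≤ n then A.coeff n else 0 :=
  rfl

theorem coeff_truncPlus (A : LS R) (n : ℤ) :
    (truncPlus A).coeff n = if n ≤ 0 then A.coeff n else 0 :=
  rfl

theorem truncPlus_add_truncMinus (A : LS R) : truncPlus A + truncMinus A = A := by
  ext n
  rw [HahnSeries.coeff_add, coeff_truncPlus, coeff_truncMinus]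
  grind

theorem truncMinus_eq_zero_iff_s1 {A : LS R} :
    truncMinus A = 0 ↔ ∀ n : ℤ, 1 ≤ n → A.coeff n = 0 := by
  simp [HahnSeries.ext_iff, funext_iff, coeff_truncMinus]

/-- The ring of polynomials in `z`, as the subring of series without negative powers of `z`; the
powers of `z` that occur are bounded above for every element of `LS R`. -/
def polynomialSubring (R : Type*) [CommRing R] : Subring (LS R) where
  carrier := {A | truncMinus A = 0}
  zero_mem' := by simp [truncMinus_eq_zero_iff_s1]
  one_mem' := truncMinus_eq_zero_iff_s1.2 fun n hn => by
    rw [HahnSeries.coeff_one, if_neg (by omega)]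
  add_mem' {A B} hA hB := truncMinus_eq_zero_iff_s1.2 fun n hn => by
    rw [HahnSeries.coeff_add, truncMinus_eq_zero_iff_s1.1 hA n hn, truncMinus_eq_zero_iff_s1.1 hB n hn,
      add_zero]
  neg_mem' {A} hA := truncMinus_eq_zero_iff_s1.2 fun n hn => by
    rw [HahnSeries.coeff_neg, truncMinus_eq_zero_iff_s1.1 hA n hn, neg_zero]
  mul_mem' {A B} hA hB := truncMinus_eq_zero_iff_s1.2 fun n hn => by
    rw [HahnSeries.coeff_mul]
    refine Finset.sum_eq_zero fun ij hij => ?_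
    have hsum : ij.1 + ij.2 = n := (Finset.mem_antidiagonal.1 hij).2.2
    rcases le_or_gt 1 ij.1 with h | h
    · rw [truncMinus_eq_zero_iff_s1.1 hA _ h, zero_mul]
    · rw [truncMinus_eq_zero_iff_s1.1 hB _ (by omega), mul_zero]

theorem mem_polynomialSubring {A : LS R} : A ∈ polynomialSubring R ↔ truncMinus A = 0 :=
  Iff.rfl

theorem truncPlus_ofPowerSeries (f : PowerSeries R) :
    truncPlus (HahnSeries.ofPowerSeries ℤ R f) = HahnSeries.C f.constantCoeff := by
  ext n
  rw [coeff_truncPlus, PowerSeries.coeff_coe, HahnSeries.C_apply]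
  rcases lt_trichotomy n 0 with hn | rfl | hn
  · rw [if_pos hn.le, if_pos hn, HahnSeries.coeff_single_of_ne hn.ne]
  · simp
  · rw [if_neg hn.not_ge, HahnSeries.coeff_single_of_ne hn.ne']

theorem truncPlus_eq_C_iff {A : LS R} {r : R} :
    truncPlus A = HahnSeries.C r ↔
      ∃ f : PowerSeries R, f.constantCoeff = r ∧ HahnSeries.ofPowerSeries ℤ R f = A := by
  constructor
  · intro h
    have hcoeff (n : ℤ) (hn : n ≤ 0) : A.coeff n = (HahnSeries.C r).coeff n := by
      rw [← h, coeff_truncPlus, if_pos hn]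
    refine ⟨PowerSeries.mk fun k => A.coeff k, by simp [hcoeff], ?_⟩
    ext n
    rw [PowerSeries.coeff_coe, PowerSeries.coeff_mk]
    split_ifs with hn
    · rw [hcoeff n hn.le, HahnSeries.C_apply, HahnSeries.coeff_single_of_ne hn.ne]
    · rw [Int.natAbs_of_nonneg (not_lt.1 hn)]
  · rintro ⟨f, rfl, rfl⟩
    exact truncPlus_ofPowerSeries f

theorem truncPlus_single_zero_add_tail (r : R) (g : ℕ → R) :
    truncPlus (HahnSeries.single 0 r + tail g) = HahnSeries.C r := by
  refine truncPlus_eq_C_iff.2 ⟨PowerSeries.C r + PowerSeries.X * PowerSeries.mk g, by simp, ?_⟩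
  simp [tail]

theorem exists_matrix_map_ofPowerSeries_eq {m n : Type*} {J : Matrix m n (LS R)} {J₀ : Matrix m n R}
    (hJ : J.map truncPlus = J₀.map HahnSeries.C) :
    ∃ F : Matrix m n (PowerSeries R),
      F.map PowerSeries.constantCoeff = J₀ ∧ F.map (HahnSeries.ofPowerSeries ℤ R) = J := by
  choose F hF₀ hF using fun i j => truncPlus_eq_C_iff.1 (congrFun₂ hJ i j)
  exact ⟨Matrix.of F, Matrix.ext hF₀, Matrix.ext hF⟩

end Truncation

section Cramer

variable {R n : Type*} [CommRing R] [Fintype n] [DecidableEq n]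

theorem map_cramer {S : Type*} [CommRing S] (f : R →+* S) (A : Matrix n n R) (w : n → R) (k : n) :
    f (A.cramer w k) = (A.map f).cramer (f ∘ w) k := by
  rw [Matrix.cramer_eq_adjugate_mulVec, Matrix.cramer_eq_adjugate_mulVec, RingHom.map_mulVec,
    ← RingHom.mapMatrix_apply, ← RingHom.mapMatrix_apply, RingHom.map_adjugate]

theorem eq_zero_of_cramer_eq_zero {A : Matrix n n R} (hA : IsUnit A.det) {w : n → R}
    (hw : A.cramer w = 0) : w = 0 := by
  rw [← hA.smul_eq_zero, ← Matrix.mulVec_cramer, hw, Matrix.mulVec_zero]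

theorem isUnit_det_of_map_truncPlus_eq {J : Matrix n n (LS R)} {J₀ : Matrix n n R}
    (hJ : J.map truncPlus = J₀.map HahnSeries.C) (hJ₀ : IsUnit J₀.det) : IsUnit J.det := by
  obtain ⟨F, rfl, rfl⟩ := exists_matrix_map_ofPowerSeries_eq hJ
  rw [← RingHom.mapMatrix_apply, ← RingHom.map_det, ← PowerSeries.isUnit_iff_constantCoeff] at hJ₀
  rw [← RingHom.mapMatrix_apply, ← RingHom.map_det]
  exact hJ₀.map _

theorem truncPlus_cramer_eq_zero {J : Matrix n n (LS R)} {J₀ : Matrix n n R}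
    (hJ : J.map truncPlus = J₀.map HahnSeries.C) {w : n → LS R} (hw : ∀ j, truncPlus (w j) = 0)
    (k : n) : truncPlus (J.cramer w k) = 0 := by
  obtain ⟨F, -, rfl⟩ := exists_matrix_map_ofPowerSeries_eq hJ
  choose f hf₀ hf using fun j => truncPlus_eq_C_iff.1 ((hw j).trans (map_zero HahnSeries.C).symm)
  obtain rfl : HahnSeries.ofPowerSeries ℤ R ∘ f = w := funext hf
  have hconst : PowerSeries.constantCoeff ∘ f = 0 := funext hf₀
  rw [← map_cramer, truncPlus_ofPowerSeries, map_cramer, hconst, map_zero, Pi.zero_apply, map_zero]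

theorem eq_zero_of_truncMinus_cramer_of_truncPlus {J : Matrix n n (LS R)} {J₀ : Matrix n n R}
    (hJ : J.map truncPlus = J₀.map HahnSeries.C) (hJ₀ : IsUnit J₀.det) {w : n → LS R}
    (hcramer : ∀ k, truncMinus (J.cramer w k) = 0) (hw : ∀ j, truncPlus (w j) = 0) : w = 0 := by
  refine eq_zero_of_cramer_eq_zero (isUnit_det_of_map_truncPlus_eq hJ hJ₀) (funext fun k => ?_)
  rw [← truncPlus_add_truncMinus (J.cramer w k), truncPlus_cramer_eq_zero hJ hw, hcramer, add_zero,
    Pi.zero_apply]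

theorem truncMinus_cramer_sum_smul_eq_zero {ι : Type*} {s : Finset ι} {J : Matrix n n (LS R)}
    {v : ι → n → LS R} {u : ι → LS R} {k : n}
    (hv : ∀ i ∈ s, truncMinus (J.cramer (v i) k) = 0) (hu : ∀ i ∈ s, truncMinus (u i) = 0) :
    truncMinus (J.cramer (∑ i ∈ s, u i • v i) k) = 0 := by
  simp only [← mem_polynomialSubring] at hv hu ⊢
  simp only [map_sum, map_smul, Finset.sum_apply, Pi.smul_apply, smul_eq_mul]
  exact sum_mem fun i hi => mul_mem (hu i hi) (hv i hi)

end Cramer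

namespace HeavenlySetting

variable {R : Type*} [CommRing R] (H : HeavenlySetting R) (P : LaxPair R)

/-- The Jacobian matrix of `(S^1, S^2)` with respect to `(x, y)`: row `j` is the gradient
`(S^{j+1}_x, S^{j+1}_y)`. -/
def jacobian : Matrix (Fin 2) (Fin 2) (LS R) :=
  Matrix.of fun j a => H.dS P a 0 j

theorem jacobian_map_truncPlus :
    (H.jacobian P).map truncPlus = (1 : Matrix (Fin 2) (Fin 2) R).map HahnSeries.C := by
  ext1 j a
  simp only [jacobian, dS, Matrix.map_apply, Matrix.of_apply, Matrix.one_apply, Nat.cast_zero,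
    neg_zero, truncPlus_single_zero_add_tail, eq_comm (a := a)]

variable {H P}

theorem WedgeMinusZero.truncMinus_cramer_jacobian_eq_zero (hwedge : H.WedgeMinusZero P) (a : Fin 2)
    (m : ℕ) (k : Fin 2) : truncMinus ((H.jacobian P).cramer (H.dS P a m) k) = 0 := by
  fin_cases k
  · convert hwedge a 1 m 0 using 2
    simp [jacobian, Matrix.cramer_apply, Matrix.det_fin_two]
  · convert hwedge 0 a 0 m using 2
    simp [jacobian, Matrix.cramer_apply, Matrix.det_fin_two]

end HeavenlySetting

theorem heavenly_operator_lemma_general {R n ι : Type*} [CommRing R] [Fintype n] [DecidableEq n]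
    {J : Matrix n n (LS R)} {J₀ : Matrix n n R} (hJ : J.map truncPlus = J₀.map HahnSeries.C)
    (hJ₀ : IsUnit J₀.det) {s : Finset ι} {v : ι → n → LS R} {u : ι → LS R}
    (hv : ∀ i ∈ s, ∀ k, truncMinus (J.cramer (v i) k) = 0)
    (hu : ∀ i ∈ s, truncMinus (u i) = 0)
    (hplus : ∀ j, truncPlus (∑ i ∈ s, u i * v i j) = 0) (j : n) :
    ∑ i ∈ s, u i * v i j = 0 := by
  have hsum (j : n) : (∑ i ∈ s, u i • v i) j = ∑ i ∈ s, u i * v i j := by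
    simp only [Finset.sum_apply, Pi.smul_apply, smul_eq_mul]
  simp only [← hsum] at hplus ⊢
  exact congrFun (eq_zero_of_truncMinus_cramer_of_truncPlus hJ hJ₀
    (fun k => truncMinus_cramer_sum_smul_eq_zero (fun i hi => hv i hi k) hu) hplus) j

/-- If `(dS^1 ∧ dS^2)_- = 0` and `Û` is a first-order operator
`Û F = Σ_{a,i} u^a_i ∂^a_i F` (finite sum) whose coefficients `u^a_i` are
polynomials in `z` (i.e. `(u^a_i)_- = 0`), then `(Û S^1)_+ = 0` and
`(Û S^2)_+ = 0` imply `Û S^1 = 0` and `Û S^2 = 0`. -/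
theorem heavenly_operator_lemma {R : Type*} [CommRing R]
    (H : HeavenlySetting R) (P : LaxPair R)
    (hwedge : H.WedgeMinusZero P)
    (M : ℕ) (u : Fin 2 → ℕ → LS R)
    (hu : ∀ a : Fin 2, ∀ i : ℕ, truncMinus (u a i) = 0)
    (hplus : ∀ j : Fin 2,
      truncPlus (∑ a : Fin 2, ∑ i ∈ Finset.range M, u a i * H.dS P a i j) = 0) :
    ∀ j : Fin 2, (∑ a : Fin 2, ∑ i ∈ Finset.range M, u a i * H.dS P a i j) = 0 := by
  simp only [← Finset.sum_product'] at hplus ⊢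
  exact heavenly_operator_lemma_general (H.jacobian_map_truncPlus P) (by simp)
    (fun p _ => hwedge.truncMinus_cramer_jacobian_eq_zero p.1 p.2) (fun p _ => hu p.1 p.2) hplus
end
end

section
/- Let (S^1,S^2) be a Lax–Sato pair satisfying (dS^1∧dS^2)_− = 0. Define the components of the one-form θ by θ_{t^1_n} := Res(z^n S^2_−) = S^2_{n+1} and θ_{t^2_n} := −Res(z^n S^1_−) = −S^1_{n+1} for all n ≥ 0, where Res denotes the coefficient of z^{−1}. Then θ is closed: ∂_a θ_b = ∂_b θ_a for every two time variables a, b (i.e. for every two derivations ∂_a, ∂_b ∈ {∂^1_n, ∂^2_n : n ≥ 0}, with θ_a, θ_b the corresponding components). -/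
/-!
Common setup for the second heavenly equation hierarchy (Bogdanov–Konopelchenko).

Formal series in `z` with `z`-exponents bounded above are encoded as Hahn series
over `ℤ` in the variable `w = z⁻¹`: the coefficient at `n : ℤ` of `A : LS R` is
the coefficient of `z^{-n}` of the corresponding series.
-/

noncomputable section

/-!
The residue of `∂_a S^1 ∂_b S^2 - ∂_b S^1 ∂_a S^2` is exactly `∂_b θ_a - ∂_a θ_b`. Each factor is a
monomial in `z` plus a tail in negative powers: two monomials meet in a nonnegative power of `z`,
two tails meet at `z^{-2}` or below, so only monomial times tail reaches `z^{-1}`, and `z^m` picks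
out of the tail its coefficient at `z^{-m-1}`. Closedness of `θ` is thus the vanishing of this one
coefficient.
-/

section Series

variable {R : Type*} [CommRing R]

theorem coeff_eq_zero_of_truncMinus_eq_zero {A : LS R} (hA : truncMinus A = 0) {n : ℤ}
    (hn : 1 ≤ n) : A.coeff n = 0 := by
  have hcoeff : (truncMinus A).coeff n = 0 := by rw [hA, HahnSeries.coeff_zero]
  simpa only [truncMinus, if_pos hn] using hcoeff

theorem coeff_tail_add_one (f : ℕ → R) (n : ℕ) : (tail f).coeff (n + 1) = f n := by
  rw [tail, HahnSeries.coeff_single_mul_add, one_mul, HahnSeries.ofPowerSeries_apply_coeff,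
    PowerSeries.coeff_mk]

theorem coeff_tail_mul_tail_of_lt_two (f g : ℕ → R) {n : ℤ} (hn : n < 2) :
    (tail f * tail g).coeff n = 0 := by
  have hfactor : tail f * tail g =
      HahnSeries.single (2 : ℤ) (1 : R) *
        HahnSeries.ofPowerSeries ℤ R (PowerSeries.mk f * PowerSeries.mk g) := by
    rw [tail, tail, mul_mul_mul_comm, HahnSeries.single_mul_single, ← map_mul, one_add_one_eq_two,
      one_mul]
  rw [hfactor, HahnSeries.coeff_single_mul, PowerSeries.coeff_coe, if_pos (sub_neg.mpr hn),
    mul_zero]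

theorem coeff_one_single_neg_mul_tail (r : R) (g : ℕ → R) (m : ℕ) :
    (HahnSeries.single (-(m : ℤ)) r * tail g).coeff 1 = r * g m := by
  rw [HahnSeries.coeff_single_mul, sub_neg_eq_add, add_comm, coeff_tail_add_one]

theorem coeff_one_single_neg_add_tail_mul (m n : ℕ) (r s : R) (f g : ℕ → R) :
    ((HahnSeries.single (-(m : ℤ)) r + tail f) *
      (HahnSeries.single (-(n : ℤ)) s + tail g)).coeff 1 = r * g m + s * f n := by
  have hexponent : (1 : ℤ) ≠ -(m : ℤ) + -(n : ℤ) := by omega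
  rw [add_mul, mul_add, mul_add, mul_comm (tail f) (HahnSeries.single _ _),
    HahnSeries.single_mul_single]
  simp only [HahnSeries.coeff_add, coeff_one_single_neg_mul_tail,
    coeff_tail_mul_tail_of_lt_two f g one_lt_two, HahnSeries.coeff_single_of_ne hexponent, zero_add,
    add_zero]

end Series

namespace LaxPair

variable {R : Type*} [CommRing R] (P : LaxPair R) (d : Fin 2 → ℕ → R →+ R)

/-- The component `θ_{t^{a+1}_n}` of the one-form `θ` attached to a Lax–Sato pair. -/
def oneForm (a : Fin 2) (n : ℕ) : R :=
  if a = 0 then P.Sneg 1 n else -P.Sneg 0 n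

/-- The series `∂^{a+1}_m S^{j+1}` for additive maps `∂^{a+1}_m = d a m`, where the derivatives of
the times `t^{j+1}_n` are formally set to `δ_{aj} δ_{mn}`. -/
def timeDeriv (a : Fin 2) (m : ℕ) (j : Fin 2) : LS R :=
  HahnSeries.single (-(m : ℤ)) (if a = j then 1 else 0) + tail fun k => d a m (P.Sneg j k)

/-- The component of the two-form `dS^1 ∧ dS^2` at the pair of times `t^{a+1}_m`, `t^{b+1}_n`. -/
def wedge (a : Fin 2) (m : ℕ) (b : Fin 2) (n : ℕ) : LS R :=
  P.timeDeriv d a m 0 * P.timeDeriv d b n 1 - P.timeDeriv d b n 0 * P.timeDeriv d a m 1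

theorem map_oneForm (D : R →+ R) (a : Fin 2) (n : ℕ) :
    D (P.oneForm a n) =
      (if a = 0 then 1 else 0) * D (P.Sneg 1 n) - (if a = 1 then 1 else 0) * D (P.Sneg 0 n) := by
  fin_cases a <;> simp [oneForm]

theorem coeff_one_wedge (a b : Fin 2) (m n : ℕ) :
    (P.wedge d a m b n).coeff 1 = d b n (P.oneForm a m) - d a m (P.oneForm b n) := by
  simp only [wedge, timeDeriv, HahnSeries.coeff_sub,
    coeff_one_single_neg_add_tail_mul, map_oneForm]
  ring

end LaxPair

theorem heavenly_one_form_closed_general {R : Type*} [CommRing R] (d : Fin 2 → ℕ → R →+ R)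
    (P : LaxPair R) {a b : Fin 2} {m n : ℕ} (hres : (P.wedge d a m b n).coeff 1 = 0) :
    d a m (P.oneForm b n) = d b n (P.oneForm a m) := by
  rw [P.coeff_one_wedge, sub_eq_zero] at hres
  exact hres.symm

/-- The derivation `∂^{a+1}_n` as an additive map. -/
def HeavenlySetting.derivHom {R : Type*} [CommRing R] (H : HeavenlySetting R) (a : Fin 2) (n : ℕ) :
    R →+ R :=
  AddMonoidHom.mk' (H.d a n) (H.d_add a n)

/-- If `(dS^1 ∧ dS^2)_- = 0`, the one-form `θ` with components
`θ_{t^1_n} = S^2_{n+1}` and `θ_{t^2_n} = -S^1_{n+1}` is closed: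
`∂_a θ_b = ∂_b θ_a` for all time variables `a = (a,m)`, `b = (b,n)`. -/
theorem heavenly_one_form_closed {R : Type*} [CommRing R]
    (H : HeavenlySetting R) (P : LaxPair R)
    (hwedge : H.WedgeMinusZero P) :
    ∀ a b : Fin 2, ∀ m n : ℕ,
      H.d a m (if b = 0 then P.Sneg 1 n else -P.Sneg 0 n)
        = H.d b n (if a = 0 then P.Sneg 1 m else -P.Sneg 0 m) := by
  intro a b m n
  exact heavenly_one_form_closed_general H.derivHom P
    (coeff_eq_zero_of_truncMinus_eq_zero (hwedge a b m n) le_rfl)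
end
end

section
/- Let (S^1,S^2) be a Lax–Sato pair with {S^1,S^2} = 1 which admits a τ-function Θ. Then Θ satisfies the generating heavenly equation: D^2(z)Θ_x − D^1(z)Θ_y − {D^1(z)Θ, D^2(z)Θ} = 0, coefficientwise in powers of z^{−1}. -/
/-!
Common setup for the second heavenly equation hierarchy (Bogdanov–Konopelchenko).

Formal series in `z` with `z`-exponents bounded above are encoded as Hahn series
over `ℤ` in the variable `w = z⁻¹`: the coefficient at `n : ℤ` of `A : LS R` is
the coefficient of `z^{-n}` of the corresponding series.
-/

noncomputable section

/-!
For a Lax–Sato pair with τ-function `Θ`, the negative part of `S^1` is `-D^2(z)Θ` and that of `S^2`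
is `D^1(z)Θ`. Since the derivations commute with the vertex operators, `S^1_x = 1 - D^2(z)Θ_x`,
`S^1_y = -D^2(z)Θ_y`, `S^2_x = D^1(z)Θ_x` and `S^2_y = 1 + D^1(z)Θ_y`. Expanding the bracket shows
that `1 - {S^1, S^2}` is exactly the left-hand side of the heavenly equation.
-/

theorem tail_neg {R : Type*} [CommRing R] (g : ℕ → R) : tail (fun n => -g n) = -tail g := by
  have mk_neg : PowerSeries.mk (fun n => -g n) = -PowerSeries.mk g := by
    ext n
    simp
  rw [tail, tail, mk_neg, map_neg, mul_neg]

namespace HeavenlySetting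

variable {R : Type*} [CommRing R] (H : HeavenlySetting R)

theorem d_neg (j : Fin 2) (n : ℕ) (a : R) : H.d j n (-a) = -H.d j n a :=
  map_neg (AddMonoidHom.mk' (H.d j n) (H.d_add j n)) a

/-- The vertex operator `D^{j+1}(z)F = Σ_{n≥0} z^{-n-1} ∂^{j+1}_n F`, the generating series of all
derivatives of `F` in the `j`-th family. As in `HeavenlySetting.d`, the index is shifted by one
from the usual numbering of the two families. -/
def vertexOp (j : Fin 2) (F : R) : LS R := tail fun n => H.d j n F

theorem vertexOp_d (j k : Fin 2) (m : ℕ) (F : R) :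
    H.vertexOp j (H.d k m F) = tail fun n => H.d k m (H.d j n F) :=
  congrArg tail (funext fun n => H.d_comm j n k m F)

namespace IsTau

variable {H} {P : LaxPair R} {Θ : R}

theorem dS_fst (hτ : H.IsTau P Θ) (a : Fin 2) (m : ℕ) :
    H.dS P a m 0 =
      HahnSeries.single (-(m : ℤ)) (if a = 0 then 1 else 0) - H.vertexOp 1 (H.d a m Θ) := by
  simp only [dS, (hτ _).1, d_neg, tail_neg, vertexOp_d, sub_eq_add_neg]

theorem dS_snd (hτ : H.IsTau P Θ) (a : Fin 2) (m : ℕ) :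
    H.dS P a m 1 =
      HahnSeries.single (-(m : ℤ)) (if a = 1 then 1 else 0) + H.vertexOp 0 (H.d a m Θ) := by
  simp only [dS, (hτ _).2, vertexOp_d]

theorem bracket_eq (hτ : H.IsTau P Θ) :
    H.Sx P 0 * H.Sy P 1 - H.Sy P 0 * H.Sx P 1 =
      1 - (H.vertexOp 1 (H.d 0 0 Θ) - H.vertexOp 0 (H.d 1 0 Θ)
        - (H.vertexOp 0 (H.d 0 0 Θ) * H.vertexOp 1 (H.d 1 0 Θ)
          - H.vertexOp 0 (H.d 1 0 Θ) * H.vertexOp 1 (H.d 0 0 Θ))) := by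
  have hSx_fst : H.Sx P 0 = 1 - H.vertexOp 1 (H.d 0 0 Θ) := by simp [Sx, hτ.dS_fst]
  have hSy_fst : H.Sy P 0 = -H.vertexOp 1 (H.d 1 0 Θ) := by simp [Sy, hτ.dS_fst]
  have hSx_snd : H.Sx P 1 = H.vertexOp 0 (H.d 0 0 Θ) := by simp [Sx, hτ.dS_snd]
  have hSy_snd : H.Sy P 1 = 1 + H.vertexOp 0 (H.d 1 0 Θ) := by simp [Sy, hτ.dS_snd]
  rw [hSx_fst, hSy_fst, hSx_snd, hSy_snd]
  ring

end IsTau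

end HeavenlySetting

/-- If a Lax–Sato pair satisfies `{S^1,S^2} = 1` and admits a
τ-function `Θ`, then `Θ` satisfies the generating heavenly equation
`D^2(z)Θ_x - D^1(z)Θ_y - {D^1(z)Θ, D^2(z)Θ} = 0` (coefficientwise in `z^{-1}`). -/
theorem heavenly_generating_equation {R : Type*} [CommRing R]
    (H : HeavenlySetting R) (P : LaxPair R) (Θ : R)
    (hτ : H.IsTau P Θ)
    (hbr : H.Sx P 0 * H.Sy P 1 - H.Sy P 0 * H.Sx P 1 = 1) :
    tail (fun n => H.d 1 n (H.d 0 0 Θ)) - tail (fun n => H.d 0 n (H.d 1 0 Θ))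
      - (tail (fun n => H.d 0 0 (H.d 0 n Θ)) * tail (fun n => H.d 1 0 (H.d 1 n Θ))
         - tail (fun n => H.d 1 0 (H.d 0 n Θ)) * tail (fun n => H.d 0 0 (H.d 1 n Θ))) = 0 := by
  simp only [← HeavenlySetting.vertexOp_d]
  exact sub_eq_self.mp (hτ.bracket_eq.symm.trans hbr)
end
end

section
/- Let (S^1,S^2) be a Lax–Sato pair satisfying the Lax–Sato equations ∂^2_n S^1 = {(z^n S^1)_+, S^1} for all n ≥ 0, and suppose there exist φ_0, …, φ_{N−1} ∈ R such that ∂^2_N S^1 = Σ_{i=0}^{N−1} φ_i ∂^2_i S^1 (an identity of series in z^{−1}). Set H^2_n := (z^n S^1)_+, P(z) := ∂_x H^2_N − Σ_{i=0}^{N−1} φ_i ∂_x H^2_i and Q(z) := ∂_y H^2_N − Σ_{i=0}^{N−1} φ_i ∂_y H^2_i. Then P is a monic polynomial in z of degree N, Q is a polynomial in z of degree at most N−1, and P(z)·S^1_y = Q(z)·S^1_x; i.e. the ratio S^1_y/S^1_x is a rational function of z with (at most) N poles. -/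
/-!
Common setup for the second heavenly equation hierarchy (Bogdanov–Konopelchenko).

Formal series in `z` with `z`-exponents bounded above are encoded as Hahn series
over `ℤ` in the variable `w = z⁻¹`: the coefficient at `n : ℤ` of `A : LS R` is
the coefficient of `z^{-n}` of the corresponding series.
-/

noncomputable section

namespace HeavenlySetting

variable {R : Type*} [CommRing R]

/-- `P(z) := ∂_x H^2_N - Σ_{i<N} φ_i ∂_x H^2_i`, where `H^2_n = (z^n S^1)_+`
(so `∂_x H^2_n = (z^n S^1_x)_+`). -/
def redP (H : HeavenlySetting R) (P : LaxPair R) (N : ℕ) (φ : ℕ → R) : LS R :=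
  truncPlus (zz ^ N * H.Sx P 0)
    - ∑ i ∈ Finset.range N, CC (φ i) * truncPlus (zz ^ i * H.Sx P 0)

/-- `Q(z) := ∂_y H^2_N - Σ_{i<N} φ_i ∂_y H^2_i`, where `H^2_n = (z^n S^1)_+`. -/
def redQ (H : HeavenlySetting R) (P : LaxPair R) (N : ℕ) (φ : ℕ → R) : LS R :=
  truncPlus (zz ^ N * H.Sy P 0)
    - ∑ i ∈ Finset.range N, CC (φ i) * truncPlus (zz ^ i * H.Sy P 0)

end HeavenlySetting

/-!
The map `B(X) = (X S¹_x)_+ S¹_y - (X S¹_y)_+ S¹_x` is linear over constants, and the Lax–Sato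
equations say `∂²_n S¹ = B(z^n)`. Hence the linear dependence of the flows is `B(χ) = 0` for
`χ(z) = z^N - Σ_{i<N} φ_i z^i`, while the same linearity gives `P = (χ S¹_x)_+` and
`Q = (χ S¹_y)_+`; this is the identity `P S¹_y = Q S¹_x`. The degrees follow from
`S¹_x = 1 + O(z⁻¹)` and `S¹_y = O(z⁻¹)`.
-/

section Series

variable {R : Type*} [CommRing R]

theorem CC_mul_eq_smul (r : R) (A : LS R) : CC r * A = r • A :=
  HahnSeries.C_mul_eq_smul

/-- Not found by instance resolution: `Algebra R (LS R)` is reached through power series, and its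
scalar action does not unfold reducibly to the coefficientwise one. -/
instance instIsScalarTowerLS : IsScalarTower R (LS R) (LS R) where
  smul_assoc r A B := by simp only [← CC_mul_eq_smul, smul_eq_mul, mul_assoc]

theorem coeff_zz_pow_mul (n : ℕ) (A : LS R) (k : ℤ) :
    (zz ^ n * A).coeff k = A.coeff (k + n) := by
  simp [zz, HahnSeries.single_pow, HahnSeries.coeff_single_mul]

theorem coeff_tail_of_nonpos (g : ℕ → R) {k : ℤ} (hk : k ≤ 0) : (tail g).coeff k = 0 := by
  rw [tail, HahnSeries.coeff_single_mul, one_mul, PowerSeries.coeff_coe, if_pos (by omega)]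

theorem coeff_truncPlus_of_nonpos (A : LS R) {k : ℤ} (hk : k ≤ 0) :
    (truncPlus A).coeff k = A.coeff k :=
  if_pos hk

theorem coeff_truncPlus_of_pos (A : LS R) {k : ℤ} (hk : 0 < k) : (truncPlus A).coeff k = 0 :=
  if_neg hk.not_ge

variable (R) in
/-- The projection `(·)_+` as a linear map over the constants. -/
def truncPlusLinear : LS R →ₗ[R] LS R where
  toFun := truncPlus
  map_add' A B := by
    ext k
    rcases le_or_gt k 0 with hk | hk <;>
      simp [coeff_truncPlus_of_nonpos, coeff_truncPlus_of_pos, hk]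
  map_smul' r A := by
    ext k
    rcases le_or_gt k 0 with hk | hk <;>
      simp [coeff_truncPlus_of_nonpos, coeff_truncPlus_of_pos, hk]

/-- `X ↦ (X A)_+ B - (X B)_+ A`. For `A = S_x` and `B = S_y` its value at `z^n` is the Poisson
bracket `{(z^n S)_+, S}`. -/
def truncBracket (A B : LS R) : LS R →ₗ[R] LS R :=
  LinearMap.mulRight R B ∘ₗ truncPlusLinear R ∘ₗ LinearMap.mulRight R A
    - LinearMap.mulRight R A ∘ₗ truncPlusLinear R ∘ₗ LinearMap.mulRight R B

theorem truncBracket_apply (A B X : LS R) :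
    truncBracket A B X = truncPlus (X * A) * B - truncPlus (X * B) * A :=
  rfl

/-- The polynomial `χ(z) = z^N - Σ_{i<N} φ_i z^i` attached to a relation
`∂_N = Σ_{i<N} φ_i ∂_i` between flows. -/
def reductionPoly (N : ℕ) (φ : ℕ → R) : LS R :=
  zz ^ N - ∑ i ∈ Finset.range N, φ i • zz ^ i

theorem map_reductionPoly {M : Type*} [AddCommGroup M] [Module R M] (f : LS R →ₗ[R] M)
    (N : ℕ) (φ : ℕ → R) :
    f (reductionPoly N φ) = f (zz ^ N) - ∑ i ∈ Finset.range N, φ i • f (zz ^ i) := by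
  simp [reductionPoly]

theorem truncPlus_reductionPoly_mul (N : ℕ) (φ : ℕ → R) (A : LS R) :
    truncPlus (reductionPoly N φ * A) =
      truncPlus (zz ^ N * A) - ∑ i ∈ Finset.range N, CC (φ i) * truncPlus (zz ^ i * A) := by
  simp only [CC_mul_eq_smul]
  exact map_reductionPoly (truncPlusLinear R ∘ₗ LinearMap.mulRight R A) N φ

theorem coeff_reductionPoly_mul_of_le (N : ℕ) (φ : ℕ → R) {A : LS R}
    (hA : ∀ k < 0, A.coeff k = 0) {k : ℤ} (hk : k ≤ -N) :
    (reductionPoly N φ * A).coeff k = A.coeff (k + N) := by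
  have lower_terms : ∀ i ∈ Finset.range N, φ i * A.coeff (k + i) = 0 := fun i hi ↦ by
    have := Finset.mem_range.mp hi
    rw [hA _ (by omega), mul_zero]
  simp [reductionPoly, sub_mul, Finset.sum_mul, smul_mul_assoc, HahnSeries.coeff_sum,
    coeff_zz_pow_mul, Finset.sum_eq_zero lower_terms]

theorem coeff_truncPlus_reductionPoly_mul_of_le (N : ℕ) (φ : ℕ → R) {A : LS R}
    (hA : ∀ k < 0, A.coeff k = 0) {k : ℤ} (hk : k ≤ -N) :
    (truncPlus (reductionPoly N φ * A)).coeff k = A.coeff (k + N) := by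
  rw [coeff_truncPlus_of_nonpos _ (by omega), coeff_reductionPoly_mul_of_le N φ hA hk]

end Series

namespace HeavenlySetting

variable {R : Type*} [CommRing R] (H : HeavenlySetting R) (P : LaxPair R)

theorem coeff_dS_neg (a : Fin 2) (m : ℕ) (j : Fin 2) :
    (H.dS P a m j).coeff (-m) = if a = j then 1 else 0 := by
  simp [dS, coeff_tail_of_nonpos]

theorem coeff_dS_of_lt (a : Fin 2) (m : ℕ) (j : Fin 2) {k : ℤ} (hk : k < -m) :
    (H.dS P a m j).coeff k = 0 := by
  simp [dS, coeff_tail_of_nonpos _ (show k ≤ 0 by omega), HahnSeries.coeff_single_of_ne hk.ne]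

theorem coeff_Sx_zero (j : Fin 2) : (H.Sx P j).coeff 0 = if 0 = j then 1 else 0 :=
  H.coeff_dS_neg P 0 0 j

theorem coeff_Sy_zero (j : Fin 2) : (H.Sy P j).coeff 0 = if 1 = j then 1 else 0 :=
  H.coeff_dS_neg P 1 0 j

theorem coeff_Sx_of_neg (j : Fin 2) {k : ℤ} (hk : k < 0) : (H.Sx P j).coeff k = 0 :=
  H.coeff_dS_of_lt P 0 0 j (by simpa using hk)

theorem coeff_Sy_of_neg (j : Fin 2) {k : ℤ} (hk : k < 0) : (H.Sy P j).coeff k = 0 :=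
  H.coeff_dS_of_lt P 1 0 j (by simpa using hk)

theorem redP_eq_truncPlus (N : ℕ) (φ : ℕ → R) :
    H.redP P N φ = truncPlus (reductionPoly N φ * H.Sx P 0) :=
  (truncPlus_reductionPoly_mul N φ _).symm

theorem redQ_eq_truncPlus (N : ℕ) (φ : ℕ → R) :
    H.redQ P N φ = truncPlus (reductionPoly N φ * H.Sy P 0) :=
  (truncPlus_reductionPoly_mul N φ _).symm

theorem coeff_redP_of_le (N : ℕ) (φ : ℕ → R) {k : ℤ} (hk : k ≤ -N) :
    (H.redP P N φ).coeff k = (H.Sx P 0).coeff (k + N) := by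
  rw [redP_eq_truncPlus,
    coeff_truncPlus_reductionPoly_mul_of_le N φ (fun _ ↦ H.coeff_Sx_of_neg P 0) hk]

theorem coeff_redQ_of_le (N : ℕ) (φ : ℕ → R) {k : ℤ} (hk : k ≤ -N) :
    (H.redQ P N φ).coeff k = 0 := by
  rw [redQ_eq_truncPlus,
    coeff_truncPlus_reductionPoly_mul_of_le N φ (fun _ ↦ H.coeff_Sy_of_neg P 0) hk]
  rcases hk.eq_or_lt with rfl | hlt
  · simp [coeff_Sy_zero]
  · exact H.coeff_Sy_of_neg P 0 (by omega)

theorem redP_mul_Sy_sub_redQ_mul_Sx (N : ℕ) (φ : ℕ → R) :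
    H.redP P N φ * H.Sy P 0 - H.redQ P N φ * H.Sx P 0 =
      truncBracket (H.Sx P 0) (H.Sy P 0) (zz ^ N)
        - ∑ i ∈ Finset.range N, CC (φ i) * truncBracket (H.Sx P 0) (H.Sy P 0) (zz ^ i) := by
  simp only [redP_eq_truncPlus, redQ_eq_truncPlus, CC_mul_eq_smul, ← truncBracket_apply,
    map_reductionPoly]

end HeavenlySetting

/-- If the pair satisfies `∂^2_n S^1 = {(z^n S^1)_+, S^1}` for all `n`
and `∂^2_N S^1 = Σ_{i<N} φ_i ∂^2_i S^1`, then `P` is a monic polynomial in `z` of degree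
`N`, `Q` is a polynomial in `z` of degree at most `N-1`, and `P · S^1_y = Q · S^1_x`
(so `S^1_y / S^1_x` is rational in `z` with at most `N` poles). Recall that the
coefficient of `z^m` is the coefficient at `-m : ℤ` of the Hahn series. -/
theorem heavenly_N_reduction_rational {R : Type*} [CommRing R]
    (H : HeavenlySetting R) (P : LaxPair R)
    (hLS : ∀ n : ℕ, H.dS P 1 n 0 =
      truncPlus (zz ^ n * H.Sx P 0) * H.Sy P 0 - truncPlus (zz ^ n * H.Sy P 0) * H.Sx P 0)
    (N : ℕ) (φ : ℕ → R)
    (hdep : H.dS P 1 N 0 = ∑ i ∈ Finset.range N, CC (φ i) * H.dS P 1 i 0) :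
    ((H.redP P N φ).coeff (-(N : ℤ)) = 1
      ∧ (∀ k : ℤ, k < -(N : ℤ) → (H.redP P N φ).coeff k = 0)
      ∧ (∀ k : ℤ, 1 ≤ k → (H.redP P N φ).coeff k = 0))
    ∧ ((∀ k : ℤ, k ≤ -(N : ℤ) → (H.redQ P N φ).coeff k = 0)
      ∧ (∀ k : ℤ, 1 ≤ k → (H.redQ P N φ).coeff k = 0))
    ∧ H.redP P N φ * H.Sy P 0 = H.redQ P N φ * H.Sx P 0 := by
  refine ⟨⟨?_, fun k hk ↦ ?_, fun k hk ↦ ?_⟩, ⟨fun k hk ↦ H.coeff_redQ_of_le P N φ hk,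
    fun k hk ↦ ?_⟩, ?_⟩
  · rw [H.coeff_redP_of_le P N φ le_rfl, neg_add_cancel, H.coeff_Sx_zero, if_pos rfl]
  · rw [H.coeff_redP_of_le P N φ hk.le, H.coeff_Sx_of_neg P 0 (by omega)]
  · rw [H.redP_eq_truncPlus, coeff_truncPlus_of_pos _ hk]
  · rw [H.redQ_eq_truncPlus, coeff_truncPlus_of_pos _ hk]
  · simp only [hLS, ← truncBracket_apply] at hdep
    rw [← sub_eq_zero, H.redP_mul_Sy_sub_redQ_mul_Sx, hdep, sub_self]
end
end

section
/- Let R be a field (of characteristic zero) in the setting below, let (S^1,S^2) be a Lax–Sato pair satisfying the Lax–Sato equations ∂^2_n S^1 = {(z^n S^1)_+, S^1} for all n ≥ 0, and suppose S^1_y = V·S^1_x where V = Σ_{i=1}^{N} u_i/(z−v_i) with u_i, v_i ∈ R and v_1, …, v_N pairwise distinct (here 1/(z−v_i) := Σ_{k≥0} v_i^k z^{−k−1}, and the identity S^1_y = V S^1_x is coefficientwise in z^{−1}). Then there exist λ_0, …, λ_N ∈ R, not all zero, such that Σ_{n=0}^{N} λ_n ∂^2_n S^1 = 0; in particular, if the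 dependence can be normalized with λ_N = 1, then ∂^2_N S^1 = Σ_{i=0}^{N−1} φ_i ∂^2_i S^1 with φ_i := −λ_i. -/
/-!
Common setup for the second heavenly equation hierarchy (Bogdanov–Konopelchenko).

Formal series in `z` with `z`-exponents bounded above are encoded as Hahn series
over `ℤ` in the variable `w = z⁻¹`: the coefficient at `n : ℤ` of `A : LS R` is
the coefficient of `z^{-n}` of the corresponding series.
-/

noncomputable section

/-!
Write `f = S^1_x` and `V = p/Q` with `Q = ∏ (z - v_i)`. Since `f = 1 + O(z⁻¹)` is invertible, there
is a polynomial `L` with `L f = Q + O(z⁻¹)`, and it is monic of the same degree as `Q`. As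
`V = S^1_y / f = O(1)`, also `L V f = p + O(z⁻¹)`. Hence, with `λ_n` the coefficients of `L`, the
combination `∑ λ_n ∂^2_n S^1` equals `(L f)_+ V f - (L V f)_+ f = (Q V - p) f = 0`. In the encoding
by Hahn series, `A = O(z⁻¹)` reads `0 < A.orderTop`.
-/

section OrderTop

open HahnSeries

variable {Γ R : Type*} [AddCommGroup Γ] [LinearOrder Γ] [CommRing R]

lemma orderTop_nonneg_of_sub_one_pos {A : HahnSeries Γ R} (hA : 0 < (A - 1).orderTop) :
    0 ≤ A.orderTop := by
  rw [← sub_add_cancel A 1]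
  exact (le_min hA.le orderTop_single_le).trans min_orderTop_le_orderTop_add

variable [IsOrderedAddMonoid Γ]

lemma orderTop_mul_pos {A B : HahnSeries Γ R} (hA : 0 ≤ A.orderTop) (hB : 0 < B.orderTop) :
    0 < (A * B).orderTop :=
  (hB.trans_le (le_add_of_nonneg_left hA)).trans_le orderTop_add_le_mul

lemma exists_mul_eq_one_of_orderTop_sub_one_pos {A : HahnSeries Γ R}
    (hA : 0 < (A - 1).orderTop) : ∃ B, A * B = 1 ∧ 0 < (B - 1).orderTop :=
  let U := toOrderTopSubOnePos hA
  ⟨U⁻¹.1.val, U.1.mul_inv, U⁻¹.2⟩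

end OrderTop

section SeriesInInverseVariable

open Finset
open Polynomial hiding CC
open HahnSeries hiding C

variable {R : Type*} [CommRing R]

lemma coeff_CC_mul (r : R) (A : LS R) (k : ℤ) : (CC r * A).coeff k = r * A.coeff k := by
  rw [CC, C_mul_eq_smul, HahnSeries.coeff_smul, smul_eq_mul]

lemma algebraMap_eq_CC (r : R) : algebraMap R (LS R) r = CC r := by
  simp [CC, HahnSeries.algebraMap_apply']

lemma orderTop_pos_iff {A : LS R} : 0 < A.orderTop ↔ ∀ k ≤ 0, A.coeff k = 0 := by
  refine ⟨fun h k hk => coeff_eq_zero_of_lt_orderTop ((WithTop.coe_le_coe.2 hk).trans_lt h),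
    fun h => zero_lt_one.trans_le (le_orderTop_iff_forall.2 fun k hk => h k ?_)⟩
  exact Int.lt_add_one_iff.1 (WithTop.coe_lt_coe.1 hk)

lemma orderTop_tail_pos (g : ℕ → R) : 0 < (tail g).orderTop := by
  rw [tail, mul_comm]
  refine orderTop_mul_pos (le_orderTop_iff_forall.2 fun n hn => ?_)
    (lt_orderTop_single zero_lt_one)
  rw [ofPowerSeries_apply, embDomain_of_notMem_range]
  rintro ⟨k, rfl⟩
  exact absurd (WithTop.coe_lt_coe.1 hn) (by simp)

lemma zz_sub_CC_mul_geom (v : R) : (zz - CC v) * geom v = 1 := by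
  have hgeom : PowerSeries.mk (fun k => v ^ k) * (1 - PowerSeries.C v * PowerSeries.X) = 1 := by
    simpa [PowerSeries.rescale_mk, PowerSeries.rescale_X] using
      congrArg (PowerSeries.rescale v) (PowerSeries.mk_one_mul_one_sub_eq_one R)
  have hfactor : (zz - CC v) * single (1 : ℤ) (1 : R) =
      ofPowerSeries ℤ R (1 - PowerSeries.C v * PowerSeries.X) := by
    simp [zz, CC, sub_mul]
  rw [geom, tail, ← mul_assoc, hfactor, ← map_mul, mul_comm, hgeom, map_one]

lemma coeff_CC_mul_zz_pow (r : R) (n : ℕ) (k : ℤ) :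
    (CC r * zz ^ n).coeff k = if k = -(n : ℤ) then r else 0 := by
  simp [coeff_CC_mul, zz, single_pow, coeff_single]

lemma aeval_zz_eq_sum {p : R[X]} {N : ℕ} (hp : p.natDegree ≤ N) :
    aeval (zz : LS R) p = ∑ n ∈ range (N + 1), CC (p.coeff n) * zz ^ n := by
  simp only [aeval_eq_sum_range' (Nat.lt_add_one_of_le hp), Algebra.smul_def, algebraMap_eq_CC]

lemma coeff_aeval_zz_of_pos (p : R[X]) {k : ℤ} (hk : 0 < k) :
    (aeval (zz : LS R) p).coeff k = 0 := by
  rw [aeval_zz_eq_sum le_rfl, HahnSeries.coeff_sum]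
  exact sum_eq_zero fun n _ => (coeff_CC_mul_zz_pow _ n k).trans (if_neg (by omega))

lemma coeff_aeval_zz_neg (p : R[X]) (n : ℕ) :
    (aeval (zz : LS R) p).coeff (-(n : ℤ)) = p.coeff n := by
  simp only [aeval_zz_eq_sum le_rfl, HahnSeries.coeff_sum, coeff_CC_mul_zz_pow, neg_inj,
    Nat.cast_inj, sum_ite_eq, mem_range, ite_eq_left_iff]
  exact fun hn => (coeff_eq_zero_of_natDegree_lt (by omega)).symm

lemma exists_orderTop_sub_aeval_zz_pos (A : LS R) :
    ∃ p : R[X], 0 < (A - aeval zz p).orderTop := by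
  refine ⟨∑ n ∈ range (A.order.natAbs + 1), monomial n (A.coeff (-(n : ℤ))),
    orderTop_pos_iff.2 fun k hk => ?_⟩
  obtain ⟨n, rfl⟩ : ∃ n : ℕ, k = -(n : ℤ) := ⟨k.natAbs, by omega⟩
  simp only [HahnSeries.coeff_sub, coeff_aeval_zz_neg, finsetSum_coeff, coeff_monomial,
    sum_ite_eq', mem_range, sub_eq_zero, left_eq_ite_iff]
  exact fun hn => coeff_eq_zero_of_lt_order (by omega)

lemma truncPlus_eq_aeval_zz {A : LS R} {p : R[X]} (h : 0 < (A - aeval zz p).orderTop) :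
    truncPlus A = aeval zz p := by
  ext k
  rcases le_or_gt k 0 with hk | hk
  · simpa [truncPlus, hk, sub_eq_zero] using orderTop_pos_iff.1 h k hk
  · simp [truncPlus, hk.not_ge, coeff_aeval_zz_of_pos p hk]

lemma truncPlus_sum_CC_mul {ι : Type*} (s : Finset ι) (c : ι → R) (A : ι → LS R) :
    truncPlus (∑ i ∈ s, CC (c i) * A i) = ∑ i ∈ s, CC (c i) * truncPlus (A i) := by
  ext k
  by_cases hk : k ≤ 0 <;> simp [truncPlus, hk, coeff_CC_mul]

lemma truncPlus_aeval_zz_mul {p : R[X]} {N : ℕ} (hp : p.natDegree ≤ N) (A : LS R) :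
    truncPlus (aeval zz p * A) =
      ∑ n ∈ range (N + 1), CC (p.coeff n) * truncPlus (zz ^ n * A) := by
  simp only [aeval_zz_eq_sum hp, Finset.sum_mul, mul_assoc, truncPlus_sum_CC_mul]

lemma coeff_aeval_zz_mul_of_orderTop_pos (p : R[X]) {A : LS R} (hA : 0 < A.orderTop) {n : ℕ}
    (hn : p.natDegree ≤ n) : (aeval zz p * A).coeff (-(n : ℤ)) = 0 := by
  rw [HahnSeries.coeff_mul]
  refine sum_eq_zero fun ij hij => ?_
  have hsum := mem_antidiagonal.1 hij
  rcases le_or_gt ij.2 0 with hj | hj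
  · rw [orderTop_pos_iff.1 hA _ hj, mul_zero]
  · obtain ⟨m, hm⟩ : ∃ m : ℕ, ij.1 = -(m : ℤ) := ⟨ij.1.natAbs, by omega⟩
    rw [hm, coeff_aeval_zz_neg, coeff_eq_zero_of_natDegree_lt (by omega), zero_mul]

lemma exists_natDegree_le_orderTop_mul_sub_pos {f : LS R} (hf : 0 < (f - 1).orderTop)
    {Q : R[X]} {N : ℕ} (hQ : Q.natDegree ≤ N) :
    ∃ L : R[X], L.natDegree ≤ N ∧ L.coeff N = Q.coeff N ∧
      0 < (aeval zz L * f - aeval zz Q).orderTop := by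
  obtain ⟨g, hfg, hg⟩ := exists_mul_eq_one_of_orderTop_sub_one_pos hf
  obtain ⟨L, hL⟩ := exists_orderTop_sub_aeval_zz_pos (aeval zz Q * g)
  have hcoeff (n : ℕ) (hn : N ≤ n) : L.coeff n = Q.coeff n := by
    have hQg := orderTop_pos_iff.1 hL (-(n : ℤ)) (by omega)
    have hQ1 := coeff_aeval_zz_mul_of_orderTop_pos Q hg (hQ.trans hn)
    rw [mul_sub, mul_one] at hQ1
    rw [HahnSeries.coeff_sub, coeff_aeval_zz_neg, sub_eq_zero] at hQg hQ1
    exact hQg.symm.trans hQ1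
  refine ⟨L, natDegree_le_iff_coeff_eq_zero.2 fun n hn => ?_, hcoeff N le_rfl, ?_⟩
  · rw [hcoeff n hn.le, coeff_eq_zero_of_natDegree_lt (hQ.trans_lt hn)]
  · have hsub : aeval zz L * f - aeval zz Q = -(f * (aeval zz Q * g - aeval zz L)) := by
      linear_combination aeval (zz : LS R) Q * hfg
    rw [hsub, orderTop_neg]
    exact orderTop_mul_pos (orderTop_nonneg_of_sub_one_pos hf) hL

lemma exists_truncPlus_mul_eq_truncPlus_mul {f V : LS R} (hf : 0 < (f - 1).orderTop)
    (hV : 0 ≤ V.orderTop) {p Q : R[X]} (hQV : aeval zz Q * V = aeval zz p) {N : ℕ}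
    (hQ : Q.natDegree ≤ N) :
    ∃ L : R[X], L.natDegree ≤ N ∧ L.coeff N = Q.coeff N ∧
      truncPlus (aeval zz L * f) * (V * f) = truncPlus (aeval zz L * (V * f)) * f := by
  obtain ⟨L, hdeg, hcoeff, hL⟩ := exists_natDegree_le_orderTop_mul_sub_pos hf hQ
  refine ⟨L, hdeg, hcoeff, ?_⟩
  have hLV : 0 < (aeval zz L * (V * f) - aeval zz p).orderTop := by
    rw [← hQV, mul_left_comm, mul_comm _ V, ← mul_sub]
    exact orderTop_mul_pos hV hL
  rw [truncPlus_eq_aeval_zz hL, truncPlus_eq_aeval_zz hLV, ← hQV, mul_assoc]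

lemma aeval_zz_nodal_mul_sum_geom {ι : Type*} [DecidableEq ι] (s : Finset ι) (u v : ι → R) :
    aeval zz (Lagrange.nodal s v) * ∑ i ∈ s, CC (u i) * geom (v i) =
      aeval zz (∑ i ∈ s, C (u i) * Lagrange.nodal (s.erase i) v) := by
  rw [Finset.mul_sum, map_sum]
  refine sum_congr rfl fun i hi => ?_
  have hfactor : aeval (zz : LS R) (X - C (v i)) * geom (v i) = 1 := by
    simpa [algebraMap_eq_CC] using zz_sub_CC_mul_geom (v i)
  rw [Lagrange.nodal_eq_mul_nodal_erase hi, map_mul, map_mul, aeval_C, algebraMap_eq_CC,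
    mul_left_comm, mul_right_comm, hfactor, one_mul]

lemma eq_sum_CC_neg_mul_of_sum_CC_mul_eq_zero {l : ℕ → R} {A : ℕ → LS R} {N : ℕ}
    (h : ∑ n ∈ range (N + 1), CC (l n) * A n = 0) (hl : l N = 1) :
    A N = ∑ n ∈ range N, CC (-l n) * A n := by
  have hN : CC (l N) * A N = A N := by simp [hl, CC]
  rw [sum_range_succ, hN] at h
  simpa [CC] using eq_neg_of_add_eq_zero_right h

end SeriesInInverseVariable

section Heavenly

open Finset
open Polynomial hiding CC

variable {R : Type*} [CommRing R]

namespace HeavenlySetting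

variable (H : HeavenlySetting R) (P : LaxPair R)

lemma orderTop_Sx_sub_one_pos : 0 < (H.Sx P 0 - 1).orderTop := by
  simpa [Sx, dS] using orderTop_tail_pos _

lemma orderTop_Sy_pos : 0 < (H.Sy P 0).orderTop := by
  simpa [Sy, dS] using orderTop_tail_pos _

end HeavenlySetting

lemma exists_sum_CC_mul_dS_eq_zero_of_aeval_mul_eq_aeval
    (H : HeavenlySetting R) (P : LaxPair R)
    (hLS : ∀ n : ℕ, H.dS P 1 n 0 =
      truncPlus (zz ^ n * H.Sx P 0) * H.Sy P 0 - truncPlus (zz ^ n * H.Sy P 0) * H.Sx P 0)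
    {V : LS R} {p Q : R[X]} (hQV : aeval zz Q * V = aeval zz p) {N : ℕ} (hQ : Q.natDegree ≤ N)
    (hratio : H.Sy P 0 = V * H.Sx P 0) :
    ∃ l : ℕ → R, l N = Q.coeff N ∧ ∑ n ∈ range (N + 1), CC (l n) * H.dS P 1 n 0 = 0 := by
  have hSx := H.orderTop_Sx_sub_one_pos P
  have hV : 0 ≤ V.orderTop := by
    obtain ⟨g, hg, hg1⟩ := exists_mul_eq_one_of_orderTop_sub_one_pos hSx
    rw [← mul_one V, ← hg, ← mul_assoc, ← hratio, mul_comm]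
    exact (orderTop_mul_pos (orderTop_nonneg_of_sub_one_pos hg1) (H.orderTop_Sy_pos P)).le
  obtain ⟨L, hdeg, hcoeff, hL⟩ := exists_truncPlus_mul_eq_truncPlus_mul hSx hV hQV hQ
  refine ⟨L.coeff, hcoeff, ?_⟩
  rw [← hratio, ← sub_eq_zero, truncPlus_aeval_zz_mul hdeg, truncPlus_aeval_zz_mul hdeg,
    Finset.sum_mul, Finset.sum_mul, ← sum_sub_distrib] at hL
  simpa only [hLS, mul_sub, mul_assoc] using hL

theorem heavenly_rational_ratio_implies_dependence_general
    (H : HeavenlySetting R) (P : LaxPair R)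
    (hLS : ∀ n : ℕ, H.dS P 1 n 0 =
      truncPlus (zz ^ n * H.Sx P 0) * H.Sy P 0 - truncPlus (zz ^ n * H.Sy P 0) * H.Sx P 0)
    {N : ℕ} (u v : Fin N → R)
    (hratio : H.Sy P 0 = (∑ i : Fin N, CC (u i) * geom (v i)) * H.Sx P 0) :
    ∃ l : ℕ → R, l N = 1 ∧ ∑ n ∈ range (N + 1), CC (l n) * H.dS P 1 n 0 = 0 := by
  nontriviality R
  have hdeg : (Lagrange.nodal univ v).natDegree = N := by simp
  have hlead : (Lagrange.nodal univ v).coeff N = 1 := by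
    simpa only [hdeg] using (Lagrange.nodal_monic (s := univ) (v := v)).coeff_natDegree
  simpa only [hlead] using exists_sum_CC_mul_dS_eq_zero_of_aeval_mul_eq_aeval H P hLS
    (aeval_zz_nodal_mul_sum_geom univ u v) hdeg.le hratio

end Heavenly

/-- Over a field of characteristic zero, if the pair satisfies the
Lax–Sato equations `∂^2_n S^1 = {(z^n S^1)_+, S^1}` and `S^1_y = V · S^1_x` with
`V = Σ_i u_i/(z - v_i)` (the `v_i` pairwise distinct), then `∂^2_0 S^1, …, ∂^2_N S^1`
are linearly dependent over `R`: there are `λ_0, …, λ_N`, not all zero, with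
`Σ_{n≤N} λ_n ∂^2_n S^1 = 0`; in particular, when normalized with `λ_N = 1`,
`∂^2_N S^1 = Σ_{i<N} φ_i ∂^2_i S^1` with `φ_i = -λ_i`. -/
theorem heavenly_rational_ratio_implies_dependence {R : Type*} [Field R] [CharZero R]
    (H : HeavenlySetting R) (P : LaxPair R)
    (hLS : ∀ n : ℕ, H.dS P 1 n 0 =
      truncPlus (zz ^ n * H.Sx P 0) * H.Sy P 0 - truncPlus (zz ^ n * H.Sy P 0) * H.Sx P 0)
    (N : ℕ) (u v : Fin N → R) (hv : Function.Injective v)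
    (hratio : H.Sy P 0 = (∑ i : Fin N, CC (u i) * geom (v i)) * H.Sx P 0) :
    ∃ l : ℕ → R, (∃ n ≤ N, l n ≠ 0) ∧
      (∑ n ∈ Finset.range (N + 1), CC (l n) * H.dS P 1 n 0) = 0 ∧
      (l N = 1 → H.dS P 1 N 0 = ∑ i ∈ Finset.range N, CC (-l i) * H.dS P 1 i 0) := by
  obtain ⟨l, hlN, hsum⟩ := heavenly_rational_ratio_implies_dependence_general H P hLS u v hratio
  exact ⟨l, ⟨N, le_rfl, by simp [hlN]⟩, hsum, eq_sum_CC_neg_mul_of_sum_CC_mul_eq_zero hsum⟩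
end
end
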